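/- There exists a positive absolute constant c such that for every positive integer n, every β > 0, and every j ∈ [n] with j ≥ β^{-1}, one has P(N_j ≤ e^{-2} β^{-1} / 4) ≤ exp(-c β^{-1}). -/

import Mathlib

/-!
The bound uses only the exponential variables; the permutation `σ₀` plays no role. Write
`L = β⁻¹` and `p = e⁻²`. Since `b_k ≥ k + E_k`, every `k < j` with `E_k ≥ j - k` lies in `H_j`, and if
moreover `j - k ≤ L` then this happens with probability `exp(-2β(j - k)) ≥ p`. As `j ≥ L`
(1-indexed), there are at least `L - 1` such `k` (`windowSet`, `le_card_windowSet`). So `N_j - 1`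
stochastically dominates a binomial variable with at least `L - 1` trials of success probability `p`,
and the Chernoff bound with parameter `1` (`exp_chernoff`), together with `1 - e⁻¹ ≥ 1/2`, gives
`P(N_j ≤ pL/4) ≤ exp((pL/4 - 1) - p(L - 1)/2) ≤ exp(-pL/4)`.
-/

open scoped BigOperators Classical ENNReal
open MeasureTheory

/-- The (unnormalized) Mallows weight `exp(-β ∑ᵢ |σ(i) - i|)` for the `L¹` distance.
Permutations of `[n] = {1, …, n}` are modeled as permutations of `Fin n`. -/
noncomputable def mallowsWeight (n : ℕ) (β : ℝ) (σ : Equiv.Perm (Fin n)) : ℝ :=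
  Real.exp (-β * ∑ i : Fin n, |((σ i : ℕ) : ℝ) - ((i : ℕ) : ℝ)|)

/-- The probability of `σ` under the Mallows permutation model `P_{n,β}`. -/
noncomputable def mallowsProb (n : ℕ) (β : ℝ) (σ : Equiv.Perm (Fin n)) : ℝ :=
  mallowsWeight n β σ / ∑ τ : Equiv.Perm (Fin n), mallowsWeight n β τ

instance (n : ℕ) : MeasurableSpace (Equiv.Perm (Fin n)) := ⊤

/-- The Mallows model `P_{n,β}` as a measure on `S_n`. -/
noncomputable def mallowsMeasure (n : ℕ) (β : ℝ) : Measure (Equiv.Perm (Fin n)) :=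
  ∑ σ : Equiv.Perm (Fin n),
    ENNReal.ofReal (mallowsProb n β σ) • MeasureTheory.Measure.dirac σ

/-- The probability space carrying `σ₀ ~ P_{n,β}` together with `n` i.i.d. exponential
random variables `E₁, …, E_n` of rate `2β`, independent of `σ₀`.  A sample point is
`ω = (σ₀, (E_k)_{k ∈ [n]})`. -/
noncomputable def hitRunMeasure (n : ℕ) (β : ℝ) :
    Measure (Equiv.Perm (Fin n) × (Fin n → ℝ)) :=
  (mallowsMeasure n β).prod
    (Measure.pi fun _ : Fin n => ProbabilityTheory.expMeasure (2 * β))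

/-- `b_k = max{k, σ₀(k)} + E_k` (so that, conditionally on `σ₀`,
`P(b_k ≥ x | σ₀) = exp(-2β (x - max{k, σ₀(k)})₊)`).  In `Fin n` coordinates all the
`b_k` and the thresholds `j` are shifted by one simultaneously. -/
noncomputable def bVal (n : ℕ) (ω : Equiv.Perm (Fin n) × (Fin n → ℝ)) (k : Fin n) : ℝ :=
  max ((k : ℕ) : ℝ) ((ω.1 k : ℕ) : ℝ) + ω.2 k

/-- `H_j = {k ∈ [n] : k ≤ j - 1, b_k ≥ j}`. -/
noncomputable def Hset (n : ℕ) (ω : Equiv.Perm (Fin n) × (Fin n → ℝ)) (j : Fin n) :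
    Finset (Fin n) :=
  Finset.univ.filter fun k => k < j ∧ ((j : ℕ) : ℝ) ≤ bVal n ω k

/-- `N_j = 1 + #{k ∈ [n] : k ≤ j - 1, b_k ≥ j}`. -/
noncomputable def Nval (n : ℕ) (ω : Equiv.Perm (Fin n) × (Fin n → ℝ)) (j : Fin n) : ℕ :=
  1 + (Hset n ω j).card

lemma mallowsMeasure_univ (n : ℕ) (β : ℝ) : mallowsMeasure n β Set.univ = 1 := by
  have hpos : ∀ τ, 0 < mallowsWeight n β τ := fun τ => Real.exp_pos _
  have hZ : 0 < ∑ τ : Equiv.Perm (Fin n), mallowsWeight n β τ :=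
    Finset.sum_pos (fun τ _ => hpos τ) Finset.univ_nonempty
  have h1 : ∑ σ : Equiv.Perm (Fin n), mallowsProb n β σ = 1 := by
    unfold mallowsProb
    rw [← Finset.sum_div, div_self hZ.ne']
  simp only [mallowsMeasure, Measure.coe_finsetSum, Finset.sum_apply, Measure.smul_apply,
    measure_univ, smul_eq_mul, mul_one]
  rw [← ENNReal.ofReal_sum_of_nonneg (f := mallowsProb n β)
    (fun σ _ => div_nonneg (hpos σ).le hZ.le), h1,
    ENNReal.ofReal_one]

lemma expMeasure_real_Ici_ge {β : ℝ} (hβ : 0 < β) {x : ℝ} (hx0 : 0 ≤ x) (hx : x ≤ β⁻¹) :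
    Real.exp (-2) ≤ (ProbabilityTheory.expMeasure (2 * β)).real (Set.Ici x) := by
  have hr : 0 < 2 * β := by positivity
  have := ProbabilityTheory.isProbabilityMeasure_expMeasure hr
  have hcdf := ProbabilityTheory.cdf_expMeasure_eq hr x
  rw [ProbabilityTheory.cdf_eq_real, if_pos hx0] at hcdf
  have hIoi : (ProbabilityTheory.expMeasure (2 * β)).real (Set.Ioi x)
      = Real.exp (-(2 * β * x)) := by
    rw [← Set.compl_Iic, probReal_compl_eq_one_sub measurableSet_Iic, hcdf]
    ring
  have hβx : β * x ≤ 1 := by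
    calc β * x ≤ β * β⁻¹ := by gcongr
      _ = 1 := mul_inv_cancel₀ hβ.ne'
  calc Real.exp (-2) ≤ Real.exp (-(2 * β * x)) := Real.exp_le_exp.2 (by linarith)
    _ = (ProbabilityTheory.expMeasure (2 * β)).real (Set.Ioi x) := hIoi.symm
    _ ≤ _ := measureReal_mono Set.Ioi_subset_Ici_self

/-- Single-coordinate Laplace transform bound: the factor of `E[e^{-X}]` contributed by one trial
`{d ≤ E_k}` of success probability at least `e⁻²`. -/
lemma integral_factor_le {β : ℝ} (hβ : 0 < β) {d : ℝ} (hd0 : 0 ≤ d) (hd : d ≤ β⁻¹) :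
    ∫ x, (if d ≤ x then Real.exp (-1) else 1) ∂(ProbabilityTheory.expMeasure (2 * β))
      ≤ Real.exp (-(Real.exp (-2) / 2)) := by
  have hr : 0 < 2 * β := by positivity
  have := ProbabilityTheory.isProbabilityMeasure_expMeasure hr
  have hform : (fun x : ℝ => if d ≤ x then Real.exp (-1) else 1)
      = fun x => 1 - (Set.Ici d).indicator (fun _ => 1 - Real.exp (-1)) x := by
    funext x
    by_cases h : d ≤ x <;> simp [Set.indicator, h]
  have he : Real.exp (-1) ≤ 1 / 2 := by
    have h2 : (2 : ℝ) ≤ Real.exp 1 := by linarith [Real.add_one_le_exp (1 : ℝ)]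
    rw [Real.exp_neg, ← one_div]
    exact one_div_le_one_div_of_le (by norm_num) h2
  have hp := expMeasure_real_Ici_ge hβ hd0 hd
  rw [hform, integral_sub (integrable_const _)
    ((integrable_const _).indicator measurableSet_Ici), integral_indicator_const _ measurableSet_Ici]
  simp only [integral_const, probReal_univ, smul_eq_mul, mul_one]
  have h0 := Real.exp_pos (-2)
  have h3 := Real.add_one_le_exp (-(Real.exp (-2) / 2))
  nlinarith

/-- Chernoff lower-tail bound for the number of successes among the independent trials
`{d k ≤ E_k}`, `k ∈ S`, each of success probability at least `e⁻²`. -/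
lemma exp_chernoff (n : ℕ) {β : ℝ} (hβ : 0 < β) (S : Finset (Fin n)) (d : Fin n → ℝ)
    (hd : ∀ k ∈ S, 0 ≤ d k ∧ d k ≤ β⁻¹) (a : ℝ) :
    (Measure.pi fun _ : Fin n => ProbabilityTheory.expMeasure (2 * β)).real
        {x | (((S.filter fun k => d k ≤ x k).card : ℕ) : ℝ) ≤ a}
      ≤ Real.exp (a - Real.exp (-2) / 2 * (S.card : ℝ)) := by
  have hr : 0 < 2 * β := by positivity
  have := ProbabilityTheory.isProbabilityMeasure_expMeasure hr
  set μ := Measure.pi fun _ : Fin n => ProbabilityTheory.expMeasure (2 * β) with hμ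
  -- The product of these factors is `e^{-X}`, where `X` is the number of successes.
  let f : Fin n → ℝ → ℝ := fun k x => if k ∈ S then (if d k ≤ x then Real.exp (-1) else 1) else 1
  have hf0 : ∀ k x, 0 ≤ f k x := by
    intro k x
    simp only [f]
    split_ifs <;> positivity
  have hprod : ∀ x : Fin n → ℝ,
      ∏ k, f k (x k) = Real.exp (-((S.filter fun k => d k ≤ x k).card : ℝ)) := by
    intro x
    simp only [f]
    rw [Finset.prod_ite_mem, Finset.univ_inter, ← Finset.prod_filter, Finset.prod_const,
      ← Real.exp_nat_mul]
    ring_nf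
  have hfint : ∀ k, Integrable (f k) (ProbabilityTheory.expMeasure (2 * β)) := by
    intro k
    refine Integrable.of_bound (C := 1) ?_ (ae_of_all _ fun x => ?_)
    · refine Measurable.aestronglyMeasurable ?_
      by_cases hk : k ∈ S
      · simp only [f, hk, if_true]
        exact Measurable.ite measurableSet_Ici measurable_const measurable_const
      · simp only [f, hk, if_false]
        exact measurable_const
    · rw [Real.norm_of_nonneg (hf0 k x)]
      simp only [f]
      split_ifs <;> simp
  have hint : Integrable (fun x : Fin n → ℝ => ∏ k, f k (x k)) μ := Integrable.fintype_prod hfint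
  have hmarkov := mul_meas_ge_le_integral_of_nonneg (μ := μ)
    (ae_of_all _ fun x => Finset.prod_nonneg fun k _ => hf0 k (x k)) hint (Real.exp (-a))
  have hset : {x : Fin n → ℝ | Real.exp (-a) ≤ ∏ k, f k (x k)}
      = {x | (((S.filter fun k => d k ≤ x k).card : ℕ) : ℝ) ≤ a} := by
    ext x
    simp [hprod]
  have hbound : ∫ x, ∏ k, f k (x k) ∂μ ≤ Real.exp (-(Real.exp (-2) / 2 * (S.card : ℝ))) := by
    rw [hμ, integral_fintype_prod_eq_prod f]
    calc ∏ k, ∫ x, f k x ∂(ProbabilityTheory.expMeasure (2 * β))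
        ≤ ∏ k, (if k ∈ S then Real.exp (-(Real.exp (-2) / 2)) else 1) := by
          refine Finset.prod_le_prod (fun k _ => integral_nonneg (hf0 k)) fun k _ => ?_
          by_cases hk : k ∈ S
          · simp only [f, hk, if_true]
            exact integral_factor_le hβ (hd k hk).1 (hd k hk).2
          · simp [f, hk]
      _ = Real.exp (-(Real.exp (-2) / 2 * (S.card : ℝ))) := by
          rw [Finset.prod_ite_mem, Finset.univ_inter, Finset.prod_const, ← Real.exp_nat_mul]
          ring_nf
  rw [hset] at hmarkov
  have hle := hmarkov.trans hbound
  rw [sub_eq_add_neg, Real.exp_add]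
  calc _ = Real.exp a * (Real.exp (-a) * μ.real
          {x | (((S.filter fun k => d k ≤ x k).card : ℕ) : ℝ) ≤ a}) := by
        rw [← mul_assoc, ← Real.exp_add]
        simp
    _ ≤ _ := by gcongr

/-- The indices `k < j` at distance at most `L` from `j`. -/
noncomputable def windowSet (n : ℕ) (j : Fin n) (L : ℝ) : Finset (Fin n) :=
  Finset.univ.filter fun k => k < j ∧ ((j : ℕ) : ℝ) - ((k : ℕ) : ℝ) ≤ L

lemma le_card_windowSet (n : ℕ) (j : Fin n) {L : ℝ} (hL : 0 < L) (hj : L ≤ ((j : ℕ) : ℝ) + 1) :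
    L - 1 ≤ ((windowSet n j L).card : ℝ) := by
  -- The window contains `j - 1, …, j - m` for `m = ⌈L⌉ - 1`.
  have hc1 : L ≤ (⌈L⌉₊ : ℝ) := Nat.le_ceil L
  have hc2 : (⌈L⌉₊ : ℝ) < L + 1 := Nat.ceil_lt_add_one hL.le
  have hc3 : ⌈L⌉₊ ≤ (j : ℕ) + 1 := Nat.ceil_le.2 (by push_cast; exact hj)
  have hc0 : 0 < ⌈L⌉₊ := Nat.ceil_pos.2 hL
  have hcard : (Finset.range (⌈L⌉₊ - 1)).card ≤ (windowSet n j L).card := by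
    refine Finset.card_le_card_of_injOn
      (fun i => (⟨(j : ℕ) - 1 - i, by have := j.2; omega⟩ : Fin n)) ?_ ?_
    · intro i hi
      have hi' : i + 1 < ⌈L⌉₊ := by
        have := Finset.mem_range.1 hi
        omega
      simp only [windowSet, Finset.coe_filter, Finset.mem_univ, true_and, Set.mem_ofPred_eq]
      refine ⟨Fin.lt_def.2 (show (j : ℕ) - 1 - i < j by omega), ?_⟩
      have h1 : ((((j : ℕ) - 1 - i : ℕ) : ℝ)) + (i + 1) = (j : ℕ) := by
        exact_mod_cast (show (j : ℕ) - 1 - i + (i + 1) = j by omega)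
      have h2 : (i : ℝ) + 1 + 1 ≤ (⌈L⌉₊ : ℝ) := by
        exact_mod_cast (show i + 1 + 1 ≤ ⌈L⌉₊ by omega)
      linarith
    · intro a ha b hb hab
      have ha' := Finset.mem_range.1 ha
      have hb' := Finset.mem_range.1 hb
      have := congrArg Fin.val hab
      simp only at this
      omega
  rw [Finset.card_range] at hcard
  have : (⌈L⌉₊ : ℝ) ≤ ((windowSet n j L).card : ℝ) + 1 := by
    exact_mod_cast (show ⌈L⌉₊ ≤ (windowSet n j L).card + 1 by omega)
  linarith

/-- Since `b_k ≥ k + E_k`, every index `k` of the window with `E_k ≥ j - k` belongs to `H_j`. -/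
lemma window_successes_card_le (n : ℕ) (ω : Equiv.Perm (Fin n) × (Fin n → ℝ)) (j : Fin n) (L : ℝ) :
    ((windowSet n j L).filter fun k : Fin n => ((j : ℕ) : ℝ) - ((k : ℕ) : ℝ) ≤ ω.2 k).card
      ≤ (Hset n ω j).card := by
  refine Finset.card_le_card fun k hk => ?_
  simp only [windowSet, Finset.mem_filter, Finset.mem_univ, true_and] at hk
  refine Finset.mem_filter.2 ⟨Finset.mem_univ k, hk.1.1, ?_⟩
  unfold bVal
  have := le_max_left ((k : ℕ) : ℝ) ((ω.1 k : ℕ) : ℝ)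
  linarith [hk.2]

/-- There is an absolute constant `c > 0` such that for all `n ≥ 1`, `β > 0`, and
`j ∈ [n]` with `j ≥ β⁻¹` (the `1`-indexed value of `j : Fin n` is `j + 1`):
`P(N_j ≤ e⁻² β⁻¹ / 4) ≤ exp(-c β⁻¹)`. -/
theorem statement8 :
    ∃ c : ℝ, 0 < c ∧
      ∀ n : ℕ, 0 < n → ∀ β : ℝ, 0 < β → ∀ j : Fin n, β⁻¹ ≤ ((j : ℕ) : ℝ) + 1 →
        hitRunMeasure n β
            {ω | (Nval n ω j : ℝ) ≤ Real.exp (-2) * β⁻¹ / 4}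
          ≤ ENNReal.ofReal (Real.exp (-c * β⁻¹)) := by
  refine ⟨Real.exp (-2) / 4, by positivity, ?_⟩
  intro n _ β hβ j hj
  have hr : 0 < 2 * β := by positivity
  have hprob := ProbabilityTheory.isProbabilityMeasure_expMeasure hr
  have hmal : IsProbabilityMeasure (mallowsMeasure n β) := ⟨mallowsMeasure_univ n β⟩
  have hL : 0 < β⁻¹ := inv_pos.2 hβ
  set S := windowSet n j β⁻¹ with hS
  set a : ℝ := Real.exp (-2) * β⁻¹ / 4 - 1 with ha
  set A : Set (Fin n → ℝ) :=
    {x | (((S.filter fun k : Fin n => ((j : ℕ) : ℝ) - ((k : ℕ) : ℝ) ≤ x k).card : ℕ) : ℝ) ≤ a} with hA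
  have hsub : {ω | (Nval n ω j : ℝ) ≤ Real.exp (-2) * β⁻¹ / 4} ⊆ Set.univ ×ˢ A := by
    intro ω hω
    refine ⟨Set.mem_univ _, ?_⟩
    have h1 : (((S.filter fun k : Fin n => ((j : ℕ) : ℝ) - ((k : ℕ) : ℝ) ≤ ω.2 k).card : ℕ) : ℝ)
        ≤ ((Hset n ω j).card : ℝ) := by
      exact_mod_cast window_successes_card_le n ω j β⁻¹
    simp only [Set.mem_ofPred_eq, Nval, Nat.cast_add, Nat.cast_one] at hω
    simp only [hA, Set.mem_ofPred_eq]
    linarith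
  have hd : ∀ k ∈ S, 0 ≤ ((j : ℕ) : ℝ) - ((k : ℕ) : ℝ) ∧
      ((j : ℕ) : ℝ) - ((k : ℕ) : ℝ) ≤ β⁻¹ := by
    intro k hk
    simp only [hS, windowSet, Finset.mem_filter, Finset.mem_univ, true_and] at hk
    have h1 : ((k : ℕ) : ℝ) ≤ ((j : ℕ) : ℝ) := by exact_mod_cast hk.1.le
    exact ⟨sub_nonneg.2 h1, hk.2⟩
  have hch := exp_chernoff n hβ S (fun k => ((j : ℕ) : ℝ) - ((k : ℕ) : ℝ)) hd a
  have hcard := le_card_windowSet n j hL hj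
  calc hitRunMeasure n β {ω | (Nval n ω j : ℝ) ≤ Real.exp (-2) * β⁻¹ / 4}
      ≤ hitRunMeasure n β (Set.univ ×ˢ A) := measure_mono hsub
    _ = (Measure.pi fun _ : Fin n => ProbabilityTheory.expMeasure (2 * β)) A := by
        rw [hitRunMeasure, Measure.prod_prod, measure_univ, one_mul]
    _ = ENNReal.ofReal
          ((Measure.pi fun _ : Fin n => ProbabilityTheory.expMeasure (2 * β)).real A) := by
        rw [ofReal_measureReal]
    _ ≤ ENNReal.ofReal (Real.exp (-(Real.exp (-2) / 4) * β⁻¹)) := by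
        refine ENNReal.ofReal_le_ofReal (hch.trans (Real.exp_le_exp.2 ?_))
        have h0 := Real.exp_pos (-2)
        have h1 : Real.exp (-2) ≤ 1 := Real.exp_le_one_iff.2 (by norm_num)
        have h2 := mul_le_mul_of_nonneg_left hcard h0.le
        rw [ha]
        linarith
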